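/- Let G be a finite connected simple graph, let W₁ and W₂ be nonempty sets of vertices of G, and let α be a natural number such that every vertex of G is within graph distance α of some vertex of W₁ ∪ W₂. Then there exist u ∈ W₁ and v ∈ W₂ with dist_G(u,v) ≤ 2α + 1. -/

import Mathlib

/-!
Suppose all distances between `W₁` and `W₂` exceed `2α + 1`. Then the set of vertices within
distance `α` of `W₁` is closed under adjacency, so by connectedness it is all of `V`. In particular
it contains a point of `W₂`, which is then within `α` of `W₁`, a contradiction.
-/

/-- Let `G` be a finite connected simple graph, `W₁`, `W₂` nonempty vertex sets, and
`α` a natural number such that every vertex is within distance `α` of `W₁ ∪ W₂`.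
Then some `u ∈ W₁` and `v ∈ W₂` satisfy `dist_G(u,v) ≤ 2α + 1`. -/
theorem stmt9 {V : Type*} [Fintype V] (G : SimpleGraph V) (hG : G.Connected)
    (W₁ W₂ : Set V) (h1 : W₁.Nonempty) (h2 : W₂.Nonempty) (α : ℕ)
    (hcov : ∀ v : V, ∃ w ∈ W₁ ∪ W₂, G.dist v w ≤ α) :
    ∃ u ∈ W₁, ∃ v ∈ W₂, G.dist u v ≤ 2 * α + 1 := by
  by_contra! hfar
  -- If `W₁` and `W₂` are far apart, an edge cannot leave the `α`-neighbourhood of `W₁`: its other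
  -- end would be within `α` of `W₂`, giving points of `W₁` and `W₂` at distance at most `α + 1 + α`.
  have key : ∀ a b : V, G.Walk a b →
      (∃ w ∈ W₁, G.dist a w ≤ α) → ∃ w ∈ W₁, G.dist b w ≤ α := by
    intro a b p
    induction p with
    | nil => exact id
    | @cons a c b hadj _ ih =>
      rintro ⟨w, hw, haw⟩
      apply ih
      obtain ⟨z, hz | hz, hcz⟩ := hcov c
      · exact ⟨z, hz, hcz⟩
      · have hwz := hfar w hw z hz
        have hac : G.dist a c = 1 := SimpleGraph.dist_eq_one_iff_adj.2 hadj
        have t₁ := hG.dist_triangle (u := w) (v := a) (w := z)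
        have t₂ := hG.dist_triangle (u := a) (v := c) (w := z)
        rw [SimpleGraph.dist_comm] at haw
        omega
  obtain ⟨u, hu⟩ := h1
  obtain ⟨v, hv⟩ := h2
  obtain ⟨p⟩ := hG.preconnected u v
  obtain ⟨w, hw, hvw⟩ := key u v p ⟨u, hu, by simp⟩
  have hwv := hfar w hw v hv
  rw [SimpleGraph.dist_comm] at hvw
  omega
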